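/- (Para-complex analogue of Lemma 2) Let n ∈ Im(Ca') with g(n,n) = −1 (a point of the pseudosphere S^{3,3} of imaginary radius), and let X, Y, Z ∈ Im(Ca') with g(X,n) = g(Y,n) = g(Z,n) = 0 (tangent vectors to S^{3,3} at n). With P X := n×X the Cayley almost para-complex structure and Ω(X,Y,Z) := g(X×Y, Z), one has Ω(PX, Y, Z) = Ω(X, PY, Z) = Ω(X, Y, PZ); explicitly, g((n×X)×Y, Z) = g(X×(n×Y), Z) = g(X×Y, n×Z). -/

import Mathlib

-- The split octonion algebra Ca' as pairs of real quaternions.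
noncomputable section

abbrev Ca : Type := Quaternion ℝ × Quaternion ℝ

namespace Ca

/-- Split octonion multiplication: (a,b)·(c,d) = (ac + (conj d)b, da + b(conj c)). -/
def mul (x y : Ca) : Ca :=
  (x.1 * y.1 + star y.2 * x.2, y.2 * x.1 + x.2 * star y.1)

/-- The unit (1,0). -/
def one : Ca := (1, 0)

/-- Conjugation conj(a,b) = (conj a, −b). -/
def conj (x : Ca) : Ca := (star x.1, -x.2)

/-- Real part Re(a,b) = re a. -/
def re (x : Ca) : ℝ := x.1.re

/-- Norm form N(a,b) = ‖a‖² − ‖b‖², of signature (4,4). -/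
def N (x : Ca) : ℝ := Quaternion.normSq x.1 - Quaternion.normSq x.2

/-- The symmetric bilinear form ⟨x,y⟩ = (N(x+y) − N(x) − N(y))/2. -/
def bil (x y : Ca) : ℝ := (N (x + y) - N x - N y) / 2

/-- The vector cross product on Im(Ca'): X × Y := X·Y + g(X,Y)·1. -/
def cross (X Y : Ca) : Ca := mul X Y + bil X Y • one

end Ca

/-!
The trilinear form `Ω(X, Y, Z) = g(X × Y, Z)` is skew-symmetric, because `X × Y` is orthogonal to
`X` and to `Y`, and polarizing `g(X × Y, X × Y) = g(X, X) g(Y, Y) - g(X, Y)²` in both variables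
gives
`g(n × Y, X × Z) + g(X × Y, n × Z) = 2 g(n, X) g(Y, Z) - g(n, Y) g(X, Z) - g(X, Y) g(n, Z)`.
For `X, Y, Z` orthogonal to `n` the right-hand side vanishes, so that
`Ω(X, n × Y, Z) = -g(n × Y, X × Z) = g(X × Y, n × Z)`; the other equality follows by skew-symmetry.
Only the axioms of a vector cross product enter, and the split octonions satisfy these because
their norm form is multiplicative.
-/

/-- A two-fold vector cross product in the sense of Brown and Gray, on a module with a symmetric
bilinear form `g`. Skew-symmetry of `c` is not an axiom: only the trilinear form `g (c X Y) Z`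
matters, and it is skew by the two orthogonality axioms. -/
structure IsVectorCrossProduct {R M : Type*} [CommRing R] [AddCommGroup M] [Module R M]
    (g : LinearMap.BilinForm R M) (c : M →ₗ[R] M →ₗ[R] M) : Prop where
  isSymm : g.IsSymm
  cross_left : ∀ X Y, g (c X Y) X = 0
  cross_right : ∀ X Y, g (c X Y) Y = 0
  cross_self : ∀ X Y, g (c X Y) (c X Y) = g X X * g Y Y - g X Y ^ 2

namespace IsVectorCrossProduct

variable {R M : Type*} [CommRing R] [AddCommGroup M] [Module R M]
  {g : LinearMap.BilinForm R M} {c : M →ₗ[R] M →ₗ[R] M}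

theorem cross_swap_left_right (h : IsVectorCrossProduct g c) (X Y Z : M) :
    g (c X Y) Z = -g (c Z Y) X := by
  have polarized := h.cross_left (X + Z) Y
  simp only [map_add, LinearMap.add_apply, h.cross_left] at polarized
  linear_combination polarized

theorem cross_swap_right (h : IsVectorCrossProduct g c) (X Y Z : M) :
    g (c X Y) Z = -g (c X Z) Y := by
  have polarized := h.cross_right X (Y + Z)
  simp only [map_add, LinearMap.add_apply, h.cross_right] at polarized
  linear_combination polarized

theorem cross_swap_left (h : IsVectorCrossProduct g c) (X Y Z : M) :
    g (c X Y) Z = -g (c Y X) Z := by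
  rw [h.cross_swap_right X Y, h.cross_swap_left_right X Z, h.cross_swap_right Y X]

variable [Invertible (2 : R)]

theorem cross_cross_same_left (h : IsVectorCrossProduct g c) (X Y Z : M) :
    g (c X Y) (c X Z) = g X X * g Y Z - g X Y * g X Z := by
  have polarized := h.cross_self X (Y + Z)
  simp only [map_add, LinearMap.add_apply, h.cross_self, h.isSymm.eq Z Y,
    h.isSymm.eq (c X Z) (c X Y)] at polarized
  refine (isUnit_of_invertible (2 : R)).mul_left_cancel ?_
  linear_combination polarized

theorem cross_cross_add_cross_cross (h : IsVectorCrossProduct g c) (W X Y Z : M) :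
    g (c W Y) (c X Z) + g (c X Y) (c W Z) =
      2 * g W X * g Y Z - g W Y * g X Z - g X Y * g W Z := by
  have polarized := h.cross_cross_same_left (W + X) Y Z
  simp only [map_add, LinearMap.add_apply, h.cross_cross_same_left, h.isSymm.eq X W] at polarized
  linear_combination polarized

theorem cross_cross_of_orthogonal (h : IsVectorCrossProduct g c) {n X Y Z : M}
    (hX : g X n = 0) (hY : g Y n = 0) (hZ : g Z n = 0) :
    g (c X (c n Y)) Z = g (c X Y) (c n Z) := by
  have anticomm : g (c n Y) (c X Z) + g (c X Y) (c n Z) = 0 := by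
    rw [h.cross_cross_add_cross_cross, h.isSymm.eq n X, h.isSymm.eq n Y, h.isSymm.eq n Z,
      hX, hY, hZ]
    ring
  rw [h.cross_swap_right, h.isSymm.eq, eq_neg_of_add_eq_zero_right anticomm]

end IsVectorCrossProduct

theorem quaternion_re_mul_comm {R : Type*} [CommRing R] (a b : Quaternion R) :
    (a * b).re = (b * a).re := by
  simp only [Quaternion.re_mul]
  ring

open scoped RealInnerProductSpace

theorem quaternion_inner_mul_star_mul (a b c d : Quaternion ℝ) :
    ⟪a * c, star d * b⟫ = ⟪d * a, b * star c⟫ := by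
  simp only [Quaternion.inner_def, star_mul, star_star, mul_assoc, quaternion_re_mul_comm d]

namespace Ca

theorem bil_eq_inner_sub_inner (x y : Ca) : bil x y = ⟪x.1, y.1⟫ - ⟪x.2, y.2⟫ := by
  simp only [bil, N, Prod.fst_add, Prod.snd_add, Quaternion.normSq_add, Quaternion.inner_def]
  ring

theorem bil_self (x : Ca) : bil x x = N x := by
  simp only [bil_eq_inner_sub_inner, Quaternion.inner_self, N]

theorem bil_comm (x y : Ca) : bil x y = bil y x := by
  simp only [bil_eq_inner_sub_inner, real_inner_comm]

theorem bil_add_left (x y z : Ca) : bil (x + y) z = bil x z + bil y z := by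
  simp only [bil_eq_inner_sub_inner, Prod.fst_add, Prod.snd_add, inner_add_left]
  ring

theorem bil_smul_left (r : ℝ) (x y : Ca) : bil (r • x) y = r * bil x y := by
  simp only [bil_eq_inner_sub_inner, Prod.smul_fst, Prod.smul_snd, real_inner_smul_left]
  ring

theorem bil_add_right (x y z : Ca) : bil x (y + z) = bil x y + bil x z := by
  simp only [bil_comm x, bil_add_left]

theorem bil_smul_right (r : ℝ) (x y : Ca) : bil x (r • y) = r * bil x y := by
  simp only [bil_comm x, bil_smul_left]

theorem bil_one_right (x : Ca) : bil x one = re x := by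
  simp [bil_eq_inner_sub_inner, one, re, Quaternion.inner_def]

theorem bil_one_left (x : Ca) : bil one x = re x := by
  rw [bil_comm, bil_one_right]

protected theorem mul_one (x : Ca) : mul x one = x := by
  simp [mul, one]

protected theorem one_mul (x : Ca) : mul one x = x := by
  simp [mul, one]

protected theorem add_mul (x y z : Ca) : mul (x + y) z = mul x z + mul y z := by
  ext1 <;> simp only [mul, Prod.fst_add, Prod.snd_add, add_mul, mul_add] <;> abel

protected theorem mul_add (x y z : Ca) : mul x (y + z) = mul x y + mul x z := by
  ext1 <;> simp only [mul, Prod.fst_add, Prod.snd_add, add_mul, mul_add, star_add] <;> abel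

protected theorem smul_mul (r : ℝ) (x y : Ca) : mul (r • x) y = r • mul x y := by
  ext1 <;> simp [mul]

protected theorem mul_smul (r : ℝ) (x y : Ca) : mul x (r • y) = r • mul x y := by
  ext1 <;> simp [mul]

theorem N_mul (x y : Ca) : N (mul x y) = N x * N y := by
  simp only [N, mul, Quaternion.normSq_add, ← Quaternion.inner_def, map_mul,
    Quaternion.normSq_star, quaternion_inner_mul_star_mul]
  ring

theorem bil_mul_mul_left (x y z : Ca) : bil (mul x y) (mul x z) = N x * bil y z := by
  simp only [bil, ← Ca.mul_add, N_mul]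
  ring

theorem bil_mul_mul_right (x y z : Ca) : bil (mul x z) (mul y z) = bil x y * N z := by
  simp only [bil, ← Ca.add_mul, N_mul]
  ring

theorem re_mul_eq_bil_conj (x y : Ca) : re (mul x y) = bil x (conj y) := by
  simp only [bil_eq_inner_sub_inner, re, mul, conj, Quaternion.inner_def, Quaternion.re_add,
    star_star, star_neg, mul_neg, Quaternion.re_neg, sub_neg_eq_add,
    quaternion_re_mul_comm x.2]

theorem conj_of_re_eq_zero {x : Ca} (hx : re x = 0) : conj x = (-1 : ℝ) • x := by
  rw [neg_one_smul]
  exact Prod.ext (Quaternion.star_eq_neg.mpr hx) rfl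

theorem re_mul_of_re_eq_zero (x : Ca) {y : Ca} (hy : re y = 0) : re (mul x y) = -bil x y := by
  rw [re_mul_eq_bil_conj, conj_of_re_eq_zero hy, bil_smul_right, neg_one_mul]

theorem re_cross (x : Ca) {y : Ca} (hy : re y = 0) : re (cross x y) = 0 := by
  have re_one : re one = 1 := rfl
  rw [← bil_one_right, cross, bil_add_left, bil_smul_left, bil_one_right, bil_one_right,
    re_mul_of_re_eq_zero x hy, re_one, mul_one, neg_add_cancel]

theorem bil_cross_of_re_eq_zero (x y : Ca) {z : Ca} (hz : re z = 0) :
    bil (cross x y) z = bil (mul x y) z := by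
  rw [cross, bil_add_left, bil_smul_left, bil_one_left, hz, mul_zero, add_zero]

theorem bil_cross_left {x y : Ca} (hx : re x = 0) (hy : re y = 0) : bil (cross x y) x = 0 := by
  calc bil (cross x y) x
      = bil (mul x y) (mul x one) := by rw [bil_cross_of_re_eq_zero x y hx, Ca.mul_one]
    _ = 0 := by rw [bil_mul_mul_left, bil_one_right, hy, mul_zero]

theorem bil_cross_right {x y : Ca} (hx : re x = 0) (hy : re y = 0) : bil (cross x y) y = 0 := by
  calc bil (cross x y) y
      = bil (mul x y) (mul one y) := by rw [bil_cross_of_re_eq_zero x y hy, Ca.one_mul]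
    _ = 0 := by rw [bil_mul_mul_right, bil_one_right, hx, zero_mul]

theorem bil_cross_self (x : Ca) {y : Ca} (hy : re y = 0) :
    bil (cross x y) (cross x y) = bil x x * bil y y - bil x y ^ 2 := by
  rw [bil_cross_of_re_eq_zero x y (re_cross x hy), cross, bil_add_right, bil_smul_right,
    bil_mul_mul_left, bil_one_right, re_mul_of_re_eq_zero x hy, bil_self x]
  ring

/-- The form `bil` as a bundled bilinear form. -/
def bilForm : LinearMap.BilinForm ℝ Ca :=
  LinearMap.mk₂ ℝ bil bil_add_left bil_smul_left bil_add_right bil_smul_right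

/-- The multiplication `mul` as a bundled bilinear map. -/
def mulBilin : Ca →ₗ[ℝ] Ca →ₗ[ℝ] Ca :=
  LinearMap.mk₂ ℝ mul Ca.add_mul Ca.smul_mul Ca.mul_add Ca.mul_smul

/-- The product `cross` as a bundled bilinear map on the whole algebra, before restriction to the
imaginary part. -/
def crossBilin : Ca →ₗ[ℝ] Ca →ₗ[ℝ] Ca :=
  mulBilin + bilForm.compr₂ (LinearMap.toSpanSingleton ℝ Ca one)

/-- The space `Im(Ca')` of purely imaginary split octonions. -/
def im : Submodule ℝ Ca where
  carrier := {x | re x = 0}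
  zero_mem' := rfl
  add_mem' {x y} (hx : x.1.re = 0) (hy : y.1.re = 0) :=
    show x.1.re + y.1.re = 0 by rw [hx, hy, add_zero]
  smul_mem' r x (hx : x.1.re = 0) := show r * x.1.re = 0 by rw [hx, mul_zero]

/-- The cross product as a bundled bilinear map on the imaginary split octonions. -/
def imCross : im →ₗ[ℝ] im →ₗ[ℝ] im :=
  LinearMap.mk₂ ℝ (fun X Y => ⟨cross X Y, re_cross X Y.2⟩)
    (fun _ _ _ => Subtype.ext (crossBilin.map_add₂ _ _ _))
    (fun _ _ _ => Subtype.ext (crossBilin.map_smul₂ _ _ _))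
    (fun X _ _ => Subtype.ext ((crossBilin X).map_add _ _))
    (fun _ X _ => Subtype.ext ((crossBilin X).map_smul _ _))

theorem isVectorCrossProduct_imCross : IsVectorCrossProduct (bilForm.restrict im) imCross where
  isSymm := ⟨fun X Y => bil_comm X Y⟩
  cross_left X Y := bil_cross_left X.2 Y.2
  cross_right X Y := bil_cross_right X.2 Y.2
  cross_self X Y := bil_cross_self X Y.2

end Ca

theorem Omega_P_property_general {R M : Type*} [CommRing R] [Invertible (2 : R)]
    [AddCommGroup M] [Module R M] {g : LinearMap.BilinForm R M} {c : M →ₗ[R] M →ₗ[R] M}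
    (h : IsVectorCrossProduct g c) {n X Y Z : M}
    (hXn : g X n = 0) (hYn : g Y n = 0) (hZn : g Z n = 0) :
    g (c (c n X) Y) Z = g (c X (c n Y)) Z ∧ g (c X (c n Y)) Z = g (c X Y) (c n Z) := by
  refine ⟨?_, h.cross_cross_of_orthogonal hXn hYn hZn⟩
  calc g (c (c n X) Y) Z
      = -g (c Y (c n X)) Z := h.cross_swap_left _ _ _
    _ = -g (c Y X) (c n Z) := by rw [h.cross_cross_of_orthogonal hYn hXn hZn]
    _ = g (c X Y) (c n Z) := (h.cross_swap_left _ _ _).symm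
    _ = g (c X (c n Y)) Z := (h.cross_cross_of_orthogonal hXn hYn hZn).symm

/-- Para-complex analogue of Lemma 2: Ω(PX,Y,Z) = Ω(X,PY,Z) = Ω(X,Y,PZ) for the
Cayley almost para-complex structure P X = n×X on the pseudosphere S^{3,3}. -/
theorem Omega_P_property (n X Y Z : Ca)
    (hn : Ca.re n = 0) (hnn : Ca.bil n n = -1)
    (hX : Ca.re X = 0) (hY : Ca.re Y = 0) (hZ : Ca.re Z = 0)
    (hXn : Ca.bil X n = 0) (hYn : Ca.bil Y n = 0) (hZn : Ca.bil Z n = 0) :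
    Ca.bil (Ca.cross (Ca.cross n X) Y) Z = Ca.bil (Ca.cross X (Ca.cross n Y)) Z ∧
    Ca.bil (Ca.cross X (Ca.cross n Y)) Z = Ca.bil (Ca.cross X Y) (Ca.cross n Z) := by
  exact Omega_P_property_general Ca.isVectorCrossProduct_imCross
    (n := ⟨n, hn⟩) (X := ⟨X, hX⟩) (Y := ⟨Y, hY⟩) (Z := ⟨Z, hZ⟩) hXn hYn hZn
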